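/- Let q > 1 be a real number and m a real number. For all naturals n and x, k with 0 ≤ x ≤ n and 0 ≤ k ≤ n, the skew-q-Krawtchouk polynomial coincides with the generalised Krawtchouk polynomial: Σ_{j=0}^{k} (−1)^j q^{2j(n−x)} q^{j(j−1)} [x;j] [n−x;k−j] γ(m−2j, k−j) = Σ_{j=0}^{k} (−1)^{k−j} q^{(k−j)(k−j−1)} [n−j; n−k] [n−x; j] q^{jm}. -/

import Mathlib

/-- The skew-q-nary Gaussian coefficient `[x;k]` for real `x`. -/
noncomputable def gaussQ (q x : ℝ) (k : ℕ) : ℝ :=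
  ∏ i ∈ Finset.range k, (q ^ (2 * x) - q ^ (2 * (i : ℝ))) / (q ^ (2 * (k : ℝ)) - q ^ (2 * (i : ℝ)))

/-- The skew-q-nary Gamma function `γ(x,k)`. -/
noncomputable def skewGamma (q x : ℝ) (k : ℕ) : ℝ :=
  ∏ i ∈ Finset.range k, (q ^ x - q ^ (2 * (i : ℝ)))

open Finset Polynomial

/-- The Gaussian binomial coefficient with base `Q` and natural arguments, as a product. -/
noncomputable def gaussBinom (Q : ℝ) (n k : ℕ) : ℝ :=
  ∏ i ∈ range k, (Q ^ n - Q ^ i) / (Q ^ k - Q ^ i)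

/-- The unnormalised `Q`-factorial `∏ (Q ^ (i + 1) - 1)`. -/
noncomputable def qFactorial (Q : ℝ) (n : ℕ) : ℝ :=
  ∏ i ∈ range n, (Q ^ (i + 1) - 1)

lemma qFactorial_ne_zero {Q : ℝ} (hQ : 1 < Q) (n : ℕ) : qFactorial Q n ≠ 0 :=
  prod_ne_zero_iff.2 fun i _ => (sub_pos.2 (one_lt_pow₀ hQ i.succ_ne_zero)).ne'

lemma prod_pow_add_sub_pow (Q : ℝ) (a b : ℕ) :
    (∏ i ∈ range a, (Q ^ (a + b) - Q ^ i)) * qFactorial Q b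
      = Q ^ a.choose 2 * qFactorial Q (a + b) := by
  induction a generalizing b with
  | zero => simp
  | succ a ih =>
    have h := ih (b + 1)
    rw [prod_range_succ, show a + 1 + b = a + (b + 1) by ring, Nat.choose_succ_succ' a 1,
      Nat.choose_one_right, pow_add Q a (a.choose (1 + 1)), mul_assoc (Q ^ a), ← h, qFactorial, qFactorial,
      prod_range_succ _ b]
    ring

lemma gaussBinom_add {Q : ℝ} (hQ : 1 < Q) (a b : ℕ) :
    gaussBinom Q (a + b) a = qFactorial Q (a + b) / (qFactorial Q a * qFactorial Q b) := by
  have h₁ := prod_pow_add_sub_pow Q a b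
  have h₂ := prod_pow_add_sub_pow Q a 0
  have hb := qFactorial_ne_zero hQ b
  have ha := qFactorial_ne_zero hQ a
  have hp : Q ^ a.choose 2 ≠ 0 := pow_ne_zero _ (by positivity)
  have h₀ : qFactorial Q 0 = 1 := prod_range_zero _
  rw [h₀, mul_one, add_zero] at h₂
  rw [gaussBinom, prod_div_distrib, h₂, div_eq_div_iff (mul_ne_zero hp ha) (mul_ne_zero ha hb)]
  linear_combination qFactorial Q a * h₁

lemma gaussBinom_eq_zero {Q : ℝ} {n k : ℕ} (h : n < k) : gaussBinom Q n k = 0 :=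
  prod_eq_zero (mem_range.2 h) (by simp)

lemma gaussBinom_zero_right (Q : ℝ) (n : ℕ) : gaussBinom Q n 0 = 1 := by
  simp [gaussBinom]

lemma gaussBinom_symm_add {Q : ℝ} (hQ : 1 < Q) (a b : ℕ) :
    gaussBinom Q (a + b) a = gaussBinom Q (a + b) b := by
  rw [gaussBinom_add hQ, add_comm a b, gaussBinom_add hQ, mul_comm (qFactorial Q a)]

lemma gaussBinom_mul {Q : ℝ} (hQ : 1 < Q) {n s l : ℕ} (hs : l ≤ s) (hn : l ≤ n) :
    gaussBinom Q n s * gaussBinom Q s l = gaussBinom Q n l * gaussBinom Q (n - l) (s - l) := by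
  obtain ⟨t, rfl⟩ := Nat.exists_eq_add_of_le hs
  rcases lt_or_ge n (l + t) with h | h
  · rw [gaussBinom_eq_zero h, gaussBinom_eq_zero (show n - l < l + t - l by omega)]
    simp
  · obtain ⟨u, rfl⟩ := Nat.exists_eq_add_of_le h
    rw [show l + t + u - l = t + u by omega, show l + t - l = t by omega, gaussBinom_add hQ,
      gaussBinom_add hQ, gaussBinom_add hQ, add_assoc, gaussBinom_add hQ]
    have := qFactorial_ne_zero hQ l
    have := qFactorial_ne_zero hQ t
    have := qFactorial_ne_zero hQ u
    have := qFactorial_ne_zero hQ (l + t)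
    have := qFactorial_ne_zero hQ (t + u)
    field_simp

lemma gaussBinom_succ_succ {Q : ℝ} (hQ : 1 < Q) (n k : ℕ) :
    Q ^ (k + 1).choose 2 * gaussBinom Q (n + 1) (k + 1)
      = Q ^ (k + 1).choose 2 * gaussBinom Q n (k + 1)
        + Q ^ n * (Q ^ k.choose 2 * gaussBinom Q n k) := by
  rw [Nat.choose_succ_succ' k 1, Nat.choose_one_right, pow_add]
  rcases lt_trichotomy n k with h | rfl | h
  · simp [gaussBinom_eq_zero h, gaussBinom_eq_zero (show n < k + 1 by omega),
      gaussBinom_eq_zero (show n + 1 < k + 1 by omega)]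
  · have hself (m : ℕ) : gaussBinom Q m m = 1 := by
      have := gaussBinom_symm_add hQ m 0
      rwa [add_zero, gaussBinom_zero_right] at this
    simp [hself, gaussBinom_eq_zero (Nat.lt_succ_self n)]
  · obtain ⟨t, rfl⟩ := Nat.exists_eq_add_of_le (Nat.succ_le_of_lt h)
    have hsucc (m : ℕ) : qFactorial Q (m + 1) = qFactorial Q m * (Q ^ (m + 1) - 1) :=
      prod_range_succ _ _
    have e₁ := gaussBinom_add hQ (k + 1) (t + 1)
    have e₂ := gaussBinom_add hQ (k + 1) t
    have e₃ := gaussBinom_add hQ k (t + 1)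
    rw [show k + (t + 1) = k + 1 + t by ring] at e₃
    have hk := qFactorial_ne_zero hQ (k + 1)
    have ht := qFactorial_ne_zero hQ (t + 1)
    rw [hsucc] at hk ht
    rw [Nat.succ_eq_add_one, add_assoc (k + 1) t 1, e₁, e₂, e₃,
      show k + 1 + (t + 1) = k + 1 + t + 1 by ring,
      hsucc (k + 1 + t), hsucc k, hsucc t]
    have hk₁ := left_ne_zero_of_mul hk
    have hk₂ := right_ne_zero_of_mul hk
    have ht₁ := left_ne_zero_of_mul ht
    have ht₂ := right_ne_zero_of_mul ht
    field_simp
    ring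

lemma coeff_prod_one_add {Q : ℝ} (hQ : 1 < Q) (z : ℝ) (n k : ℕ) :
    (∏ i ∈ range n, (1 + C (Q ^ i * z) * X)).coeff k
      = Q ^ k.choose 2 * gaussBinom Q n k * z ^ k := by
  induction n generalizing k with
  | zero =>
    rcases k with _ | k
    · simp [gaussBinom_zero_right]
    · simp [gaussBinom_eq_zero, coeff_one]
  | succ n ih =>
    rw [prod_range_succ, mul_add, mul_one, coeff_add, mul_left_comm, coeff_C_mul, ih]
    rcases k with _ | k
    · simp [gaussBinom_zero_right]
    · rw [coeff_mul_X, ih, gaussBinom_succ_succ hQ]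
      ring

/-- The `Q`-Vandermonde identity. -/
lemma gaussBinom_vandermonde {Q : ℝ} (hQ : 1 < Q) (x b r : ℕ) :
    ∑ j ∈ range (r + 1), Q ^ (j * b) * Q ^ j.choose 2 * Q ^ (r - j).choose 2 *
        (gaussBinom Q x j * gaussBinom Q b (r - j))
      = Q ^ r.choose 2 * gaussBinom Q (x + b) r := by
  have h := coeff_prod_one_add hQ 1 (b + x) r
  have hs (i : ℕ) : Q ^ (b + i) * 1 = Q ^ i * Q ^ b := by ring
  simp_rw [prod_range_add, hs] at h
  rw [mul_comm, coeff_mul, Nat.sum_antidiagonal_eq_sum_range_succ_mk] at h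
  simp_rw [coeff_prod_one_add hQ] at h
  rw [one_pow, mul_one] at h
  rw [add_comm x b, ← h]
  refine sum_congr rfl fun j _ => ?_
  rw [one_pow, mul_comm j b, pow_mul]
  ring

/-- The `Q`-binomial theorem in homogeneous form. -/
lemma prod_add_pow_mul {Q : ℝ} (hQ : 1 < Q) (t z : ℝ) (r : ℕ) :
    ∏ i ∈ range r, (t + Q ^ i * z)
      = ∑ s ∈ range (r + 1), Q ^ s.choose 2 * gaussBinom Q r s * z ^ s * t ^ (r - s) := by
  induction r with
  | zero => simp [gaussBinom_zero_right]
  | succ r ih =>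
    rw [prod_range_succ, sum_range_succ']
    simp_rw [gaussBinom_succ_succ hQ, add_mul, sum_add_distrib]
    have h₁ : ∑ s ∈ range (r + 1), Q ^ (s + 1).choose 2 * gaussBinom Q r (s + 1) * z ^ (s + 1)
          * t ^ (r + 1 - (s + 1))
        + Q ^ Nat.choose 0 2 * gaussBinom Q (r + 1) 0 * z ^ 0 * t ^ (r + 1 - 0)
        = (∏ i ∈ range r, (t + Q ^ i * z)) * t := by
      rw [ih, sum_range_succ, gaussBinom_eq_zero (Nat.lt_succ_self r), sum_range_succ', add_mul,
        sum_mul]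
      simp only [gaussBinom_zero_right]
      have : ∀ s ∈ range r, Q ^ (s + 1).choose 2 * gaussBinom Q r (s + 1) * z ^ (s + 1)
            * t ^ (r - (s + 1)) * t
          = Q ^ (s + 1).choose 2 * gaussBinom Q r (s + 1) * z ^ (s + 1)
            * t ^ (r + 1 - (s + 1)) := fun s hs => by
        rw [show r + 1 - (s + 1) = r - (s + 1) + 1 by have := mem_range.1 hs; omega]
        ring
      rw [sum_congr rfl this]
      simp only [Nat.sub_zero]
      ring
    have h₂ : ∑ s ∈ range (r + 1), Q ^ r * (Q ^ s.choose 2 * gaussBinom Q r s) * z ^ (s + 1)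
          * t ^ (r + 1 - (s + 1))
        = (∏ i ∈ range r, (t + Q ^ i * z)) * (Q ^ r * z) := by
      rw [ih, sum_mul]
      refine sum_congr rfl fun s _ => ?_
      rw [Nat.add_sub_add_right]
      ring
    linear_combination -h₁ - h₂

lemma prod_sub_pow {Q : ℝ} (hQ : 1 < Q) (t : ℝ) (r : ℕ) :
    ∏ i ∈ range r, (t - Q ^ i)
      = ∑ l ∈ range (r + 1), (-1) ^ (r - l) * Q ^ (r - l).choose 2 * gaussBinom Q r l * t ^ l := by
  have h := prod_add_pow_mul hQ t (-1) r
  simp_rw [mul_neg_one, ← sub_eq_add_neg] at h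
  rw [h, ← sum_range_reflect]
  refine sum_congr rfl fun l hl => ?_
  obtain ⟨s, rfl⟩ := Nat.exists_eq_add_of_le (Nat.lt_succ_iff.1 (mem_range.1 hl))
  rw [show l + s + 1 - 1 - l = s by omega, show l + s - l = s by omega,
    show l + s - s = l by omega, gaussBinom_symm_add hQ]
  ring

/-- The two forms of the Krawtchouk polynomial agree, in terms of `Q`, `M` and `y = n - x`. -/
lemma krawtchouk_eq {Q : ℝ} (hQ : 1 < Q) (M : ℝ) (x y k : ℕ) (hk : k ≤ x + y) :
    ∑ j ∈ range (k + 1), (-1) ^ j * Q ^ (j * y) * Q ^ j.choose 2 * gaussBinom Q x j *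
        gaussBinom Q y (k - j) * ∏ i ∈ range (k - j), (M / Q ^ j - Q ^ i)
      = ∑ l ∈ range (k + 1), (-1) ^ (k - l) * Q ^ (k - l).choose 2 *
          gaussBinom Q (x + y - l) (x + y - k) * gaussBinom Q y l * M ^ l := by
  simp_rw [prod_sub_pow hQ, mul_sum]
  rw [sum_comm' (s' := fun l => range (k - l + 1)) (t' := range (k + 1))
    (by simp only [mem_range]; omega)]
  refine sum_congr rfl fun l hl => ?_
  have hl : l ≤ k := Nat.lt_succ_iff.1 (mem_range.1 hl)
  rcases lt_or_ge y l with hy | hy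
  · rw [gaussBinom_eq_zero hy]
    simp only [mul_zero, zero_mul]
    refine sum_eq_zero fun j hj => ?_
    rw [gaussBinom_eq_zero (show y < k - j by have := mem_range.1 hj; omega)]
    simp
  · have hsym : gaussBinom Q (x + y - l) (x + y - k) = gaussBinom Q (x + (y - l)) (k - l) := by
      have := gaussBinom_symm_add hQ (x + y - k) (k - l)
      rw [show x + y - k + (k - l) = x + y - l by omega] at this
      rw [this, Nat.add_sub_assoc hy]
    rw [hsym, mul_assoc ((-1) ^ (k - l)), ← gaussBinom_vandermonde hQ, mul_sum, sum_mul, sum_mul]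
    refine sum_congr rfl fun j hj => ?_
    have hj := mem_range.1 hj
    have hg := gaussBinom_mul hQ (show l ≤ k - j by omega) hy
    rw [show k - j - l = k - l - j by omega] at hg ⊢
    have hs : (-1 : ℝ) ^ (k - l) = (-1) ^ j * (-1) ^ (k - l - j) := by
      rw [← pow_add]; congr 1; omega
    have hp : Q ^ (j * y) * (M / Q ^ j) ^ l = Q ^ (j * (y - l)) * M ^ l := by
      have : Q ^ (j * l) ≠ 0 := pow_ne_zero _ (by positivity)
      obtain ⟨u, rfl⟩ := Nat.exists_eq_add_of_le hy
      rw [div_pow, ← pow_mul, Nat.add_sub_cancel_left, mul_add, pow_add]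
      field_simp
    rw [hs]
    linear_combination (-1) ^ j * (-1) ^ (k - l - j) * Q ^ j.choose 2 * Q ^ (k - l - j).choose 2
      * gaussBinom Q x j * (Q ^ (j * y) * (M / Q ^ j) ^ l * hg
        + gaussBinom Q y l * gaussBinom Q (y - l) (k - l - j) * hp)

lemma rpow_two_mul_natCast {q : ℝ} (hq : 0 < q) (n : ℕ) : q ^ (2 * (n : ℝ)) = (q ^ 2) ^ n := by
  rw [Real.rpow_mul hq.le, Real.rpow_natCast, Real.rpow_two]

lemma gaussQ_natCast {q : ℝ} (hq : 0 < q) (n k : ℕ) :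
    gaussQ q n k = gaussBinom (q ^ 2) n k := by
  simp_rw [gaussQ, gaussBinom, rpow_two_mul_natCast hq]

lemma skewGamma_sub_two_mul {q : ℝ} (hq : 0 < q) (m : ℝ) (j r : ℕ) :
    skewGamma q (m - 2 * (j : ℝ)) r = ∏ i ∈ range r, (q ^ m / (q ^ 2) ^ j - (q ^ 2) ^ i) := by
  simp_rw [skewGamma, Real.rpow_sub hq, rpow_two_mul_natCast hq]

lemma pow_mul_pred (q : ℝ) (j : ℕ) : q ^ (j * (j - 1)) = (q ^ 2) ^ j.choose 2 := by
  rw [← pow_mul, Nat.choose_two_right, Nat.mul_div_cancel' (Nat.even_mul_pred_self j).two_dvd]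

theorem stmt3 (q : ℝ) (hq : 1 < q) (m : ℝ) (n x k : ℕ) (hx : x ≤ n) (hk : k ≤ n) :
    (∑ j ∈ Finset.range (k + 1),
        (-1 : ℝ) ^ j * q ^ (2 * j * (n - x)) * q ^ (j * (j - 1)) *
          gaussQ q (x : ℝ) j * gaussQ q ((n : ℝ) - (x : ℝ)) (k - j) *
          skewGamma q (m - 2 * (j : ℝ)) (k - j))
      = ∑ j ∈ Finset.range (k + 1),
          (-1 : ℝ) ^ (k - j) * q ^ ((k - j) * (k - j - 1)) *
            gaussQ q ((n : ℝ) - (j : ℝ)) (n - k) * gaussQ q ((n : ℝ) - (x : ℝ)) j *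
            q ^ ((j : ℝ) * m) := by
  have hq₀ : 0 < q := by positivity
  have h := krawtchouk_eq (one_lt_pow₀ hq two_ne_zero) (q ^ m) x (n - x) k (by omega)
  rw [Nat.add_sub_cancel' hx] at h
  convert h using 2 with j hj j hj
  · rw [← Nat.cast_sub hx, gaussQ_natCast hq₀, gaussQ_natCast hq₀, skewGamma_sub_two_mul hq₀,
      pow_mul_pred, mul_assoc 2 j, pow_mul q 2]
  · have hjn : j ≤ n := by have := mem_range.1 hj; omega
    rw [← Nat.cast_sub hx, ← Nat.cast_sub hjn, gaussQ_natCast hq₀, gaussQ_natCast hq₀,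
      pow_mul_pred, mul_comm (j : ℝ), Real.rpow_mul hq₀.le, Real.rpow_natCast]
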